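/- arXiv:2307.11911 — 6 statements merged into one kernel-verified Lean document; each statement's English description precedes it below -/
import Mathlib

section
/- Let N ≥ 2, let ρ₁,…,ρ_N be positive real numbers with ρ = ρ₁ + ⋯ + ρ_N, and let V₁,…,V_N be vectors in a real inner product space E. Define F_i := ρ_i·V_i − (ρ_i/ρ)·Σ_{j=1}^N ρ_j·V_j, and define for i = 1,…,N and j = 1,…,N−1 the coefficients b_{i,j} := −(ρ_i/ρ)·Σ_{k=1}^{j} ρ_k if j < i, and b_{i,j} := (ρ_i/ρ)·Σ_{k=j+1}^{N} ρ_k if j ≥ i. Then for every i = 1,…,N one has F_i = Σ_{j=1}^{N−1} b_{i,j}·(V_j − V_{j+1}). -/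
theorem tele_aux {E : Type*} [NormedAddCommGroup E] [InnerProductSpace ℝ E]
    (n : ℕ) (V : Fin (n+1) → E) (k : Fin (n+1)) :
    ∑ j : Fin n, (if (j : ℕ) < (k : ℕ) then (1:ℝ) else 0) • (V j.castSucc - V j.succ)
      = V 0 - V k := by
  induction k using Fin.induction with
  | zero => simp
  | succ k ih =>
    have h : ∀ j : Fin n, (if (j : ℕ) < (k.succ : ℕ) then (1:ℝ) else 0)
        = (if (j : ℕ) < (k.castSucc : ℕ) then (1:ℝ) else 0) + (if j = k then 1 else 0) := by
      intro j
      simp only [Fin.val_succ, Fin.val_castSucc, Fin.ext_iff]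
      split_ifs <;> first | omega | norm_num
    simp only [h, add_smul, Finset.sum_add_distrib]
    rw [ih]
    simp

/-- With N = n+1 ≥ 2 positive densities ρᵢ, total ρ, and vectors Vⱼ, the fluxes
Fᵢ := ρᵢ·Vᵢ − (ρᵢ/ρ)·Σⱼ ρⱼ·Vⱼ can be written as Fᵢ = Σ_{j=1}^{N−1} bᵢⱼ·(Vⱼ − V_{j+1}),
where bᵢⱼ = −(ρᵢ/ρ)·Σ_{k≤j} ρ_k if j < i and bᵢⱼ = (ρᵢ/ρ)·Σ_{k≥j+1} ρ_k if j ≥ i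
(indices 1-based in the informal statement; here i : Fin (n+1), j : Fin n, 0-based). -/
theorem stmt_3 {E : Type*} [NormedAddCommGroup E] [InnerProductSpace ℝ E]
    (n : ℕ) (hn : 1 ≤ n)
    (ρ : Fin (n+1) → ℝ) (hρ : ∀ i, 0 < ρ i) (V : Fin (n+1) → E)
    (F : Fin (n+1) → E)
    (hF : ∀ i, F i = ρ i • V i - (ρ i / ∑ j, ρ j) • ∑ j, ρ j • V j)
    (b : Fin (n+1) → Fin n → ℝ)
    (hb : ∀ i j, b i j =
      if (j : ℕ) < (i : ℕ) then
        -(ρ i / ∑ k, ρ k) * ∑ k ∈ Finset.univ.filter (fun k : Fin (n+1) => (k : ℕ) ≤ (j : ℕ)), ρ k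
      else
        (ρ i / ∑ k, ρ k) * ∑ k ∈ Finset.univ.filter (fun k : Fin (n+1) => (j : ℕ) < (k : ℕ)), ρ k) :
    ∀ i, F i = ∑ j, b i j • (V j.castSucc - V j.succ) := by
  intro i
  have hS : (∑ k, ρ k) ≠ 0 :=
    (Finset.sum_pos (fun k _ => hρ k) Finset.univ_nonempty).ne'
  have hb' : ∀ j, b i j = ∑ k, (ρ i / ∑ k, ρ k) * ρ k *
      ((if (j : ℕ) < (k : ℕ) then (1:ℝ) else 0) - (if (j : ℕ) < (i : ℕ) then (1:ℝ) else 0)) := by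
    intro j
    rw [hb]
    split_ifs with h
    · rw [Finset.mul_sum, Finset.sum_filter]
      refine Finset.sum_congr rfl fun k _ => ?_
      split_ifs <;> first | omega | ring
    · rw [Finset.mul_sum, Finset.sum_filter]
      refine Finset.sum_congr rfl fun k _ => ?_
      split_ifs <;> first | omega | ring
  have hd : ∀ k : Fin (n+1), ∑ j : Fin n, ((if (j : ℕ) < (k : ℕ) then (1:ℝ) else 0)
      - (if (j : ℕ) < (i : ℕ) then (1:ℝ) else 0)) • (V j.castSucc - V j.succ) = V i - V k := by
    intro k
    simp only [sub_smul _ _ (V _ - V _), Finset.sum_sub_distrib]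
    rw [tele_aux, tele_aux]
    abel
  simp only [hb', Finset.sum_smul]
  rw [Finset.sum_comm]
  simp only [mul_smul _ _ (V _ - V _), ← Finset.smul_sum]
  simp only [hd]
  simp only [smul_sub, Finset.sum_sub_distrib, mul_smul, ← Finset.smul_sum, ← Finset.sum_smul]
  rw [hF, smul_smul, div_mul_cancel₀ _ hS]
end

section
/- Let N ≥ 2 and let ρ₁,…,ρ_N be positive real numbers with ρ = ρ₁ + ⋯ + ρ_N. Let B be the (N−1)×(N−1) real matrix with entries b_{i,j} := −(ρ_i/ρ)·Σ_{k=1}^{j} ρ_k if j < i, and b_{i,j} := (ρ_i/ρ)·Σ_{k=j+1}^{N} ρ_k if j ≥ i, for i, j = 1,…,N−1. Then det B = (ρ₁·ρ₂·⋯·ρ_N)/ρ. In particular B is invertible whenever all ρ_i are positive. -/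
/-- For N = n+1 ≥ 2 positive densities ρᵢ with total ρ, the (N−1)×(N−1) matrix
B with Bᵢⱼ = −(ρᵢ/ρ)·Σ_{k≤j} ρ_k if j < i and Bᵢⱼ = (ρᵢ/ρ)·Σ_{k≥j+1} ρ_k if j ≥ i
has determinant det B = (ρ₁⋯ρ_N)/ρ; in particular B is invertible. -/
theorem stmt_4 (n : ℕ) (hn : 1 ≤ n)
    (ρ : Fin (n+1) → ℝ) (hρ : ∀ i, 0 < ρ i)
    (B : Matrix (Fin n) (Fin n) ℝ)
    (hB : ∀ i j, B i j =
      if (j : ℕ) < (i : ℕ) then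
        -(ρ i.castSucc / ∑ k, ρ k) *
          ∑ k ∈ Finset.univ.filter (fun k : Fin (n+1) => (k : ℕ) ≤ (j : ℕ)), ρ k
      else
        (ρ i.castSucc / ∑ k, ρ k) *
          ∑ k ∈ Finset.univ.filter (fun k : Fin (n+1) => (j : ℕ) < (k : ℕ)), ρ k) :
    B.det = (∏ i, ρ i) / (∑ i, ρ i) ∧ IsUnit B.det := by
  have hS : 0 < ∑ k, ρ k := Finset.sum_pos (fun i _ => hρ i) Finset.univ_nonempty
  have hP : 0 < ∏ k, ρ k := Finset.prod_pos (fun i _ => hρ i)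
  suffices h : B.det = (∏ i, ρ i) / (∑ i, ρ i) by
    refine ⟨h, ?_⟩
    rw [h]
    exact (div_pos hP hS).ne'.isUnit
  obtain ⟨m, rfl⟩ : ∃ m, n = m + 1 := ⟨n - 1, by omega⟩
  set R := ∑ k, ρ k with hR
  let s : Fin (m+1) → ℝ := fun j =>
    (∑ k ∈ Finset.univ.filter (fun k : Fin (m+1+1) => (k : ℕ) ≤ (j : ℕ)), ρ k) / R
  let U : Matrix (Fin (m+1)) (Fin (m+1)) ℝ := Matrix.of fun i j => if j < i then 0 else 1
  let e : Fin (m+1) → ℝ := Pi.single (Fin.last m) (-1)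
  have hsplit : ∀ j : Fin (m+1),
      (∑ k ∈ Finset.univ.filter (fun k : Fin (m+1+1) => (j : ℕ) < (k : ℕ)), ρ k)
        = R - ∑ k ∈ Finset.univ.filter (fun k : Fin (m+1+1) => (k : ℕ) ≤ (j : ℕ)), ρ k := by
    intro j
    rw [hR, ← Finset.sum_filter_add_sum_filter_not Finset.univ
      (fun k : Fin (m+1+1) => (k : ℕ) ≤ (j : ℕ)) ρ]
    simp only [not_le]
    ring
  have hU : U.det = 1 := by
    rw [Matrix.det_of_isUpperTriangular]
    · simp [U]
    · intro i j hij
      have : j < i := hij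
      simp [U, this]
  have hUe : U.mulVec e = fun _ => -1 := by
    ext i
    have h0 : ¬ (Fin.last m < i) := not_lt.mpr (Fin.le_last i)
    simp only [e, Matrix.mulVec, dotProduct_single, U, Matrix.of_apply, if_neg h0]
    ring
  have hfac : B = Matrix.diagonal (fun i : Fin (m+1) => ρ i.castSucc) *
      (U * (1 + Matrix.vecMulVec e s)) := by
    rw [Matrix.mul_add, Matrix.mul_one, Matrix.mul_vecMulVec, hUe]
    ext i j
    rw [Matrix.diagonal_mul, hB, hsplit]
    rw [Matrix.add_apply, Matrix.vecMulVec_apply]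
    simp only [U, s, Fin.lt_def, Matrix.of_apply]
    split_ifs
    · ring
    · field_simp
      ring
  have hlast : s (Fin.last m) = 1 - ρ (Fin.last (m+1)) / R := by
    have h1 := hsplit (Fin.last m)
    have h2 : Finset.univ.filter (fun k : Fin (m+1+1) => ((Fin.last m : Fin (m+1)) : ℕ) < (k : ℕ))
        = {Fin.last (m+1)} := by
      ext k
      simp [Fin.ext_iff]
      omega
    rw [h2, Finset.sum_singleton] at h1
    simp only [s]
    rw [h1]
    field_simp
    ring
  rw [hfac, Matrix.det_mul, Matrix.det_mul, hU, Matrix.det_diagonal, Matrix.vecMulVec_eq Unit,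
    Matrix.det_one_add_replicateCol_mul_replicateRow, Fin.prod_univ_castSucc (n := m+1)]
  simp only [e, dotProduct_single, hlast]
  ring
end

section
/- Let N ≥ 2 and let 0 < c ≤ M be real numbers. There exists a constant C > 0, depending only on N, c and M, with the following property: for all positive reals ρ₁,…,ρ_N satisfying ρ_i ≥ c for every i and ρ := ρ₁ + ⋯ + ρ_N ≤ M, and for all vectors W₁,…,W_{N−1} in a real inner product space E, one has Σ_{j=1}^{N−1} ‖W_j‖² ≤ C·Σ_{i=1}^{N−1} ‖Σ_{j=1}^{N−1} b_{i,j}·W_j‖², where b_{i,j} := −(ρ_i/ρ)·Σ_{k=1}^{j} ρ_k if j < i, and b_{i,j} := (ρ_i/ρ)·Σ_{k=j+1}^{N} ρ_k if j ≥ i. -/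
open Finset in
lemma flux_aux {E : Type} [NormedAddCommGroup E] [InnerProductSpace ℝ E] (n : ℕ) (c : ℝ)
    (hc : 0 < c) (ρ : Fin (n+1) → ℝ) (hρ : ∀ i, c ≤ ρ i) (W : Fin n → E) (F : Fin n → E)
    (hF : ∀ i : Fin n, F i = ∑ j : Fin n,
            (if (j : ℕ) < (i : ℕ) then
              -(ρ i.castSucc / ∑ k, ρ k) *
                ∑ k ∈ Finset.univ.filter (fun k : Fin (n+1) => (k : ℕ) ≤ (j : ℕ)), ρ k
            else
              (ρ i.castSucc / ∑ k, ρ k) *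
                ∑ k ∈ Finset.univ.filter (fun k : Fin (n+1) => (j : ℕ) < (k : ℕ)), ρ k) • W j)
    (j : Fin n) : ‖W j‖ ≤ 2 / c * ∑ i, ‖F i‖ := by
  have hpos : 0 < ∑ k, ρ k :=
    Finset.sum_pos (fun i _ => lt_of_lt_of_le hc (hρ i)) ⟨0, Finset.mem_univ _⟩
  set r := ∑ k, ρ k with hr
  let P : Fin n → ℝ := fun j => ∑ k : Fin (n+1), if (k : ℕ) ≤ (j : ℕ) then ρ k else 0
  have hP : ∀ j : Fin n,
      ∑ k ∈ Finset.univ.filter (fun k : Fin (n+1) => (k : ℕ) ≤ (j : ℕ)), ρ k = P j := by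
    intro j
    rw [Finset.sum_filter]
  have hR : ∀ j : Fin n,
      ∑ k ∈ Finset.univ.filter (fun k : Fin (n+1) => (j : ℕ) < (k : ℕ)), ρ k = r - P j := by
    intro j
    rw [Finset.sum_filter, hr, ← Finset.sum_sub_distrib]
    refine Finset.sum_congr rfl fun k _ => ?_
    split_ifs <;> first | omega | simp
  let g : Fin (n+1) → E := fun i =>
    ∑ j : Fin n, ((if (i : ℕ) ≤ (j : ℕ) then (1:ℝ) else 0) - P j / r) • W j
  have hFg : ∀ i : Fin n, F i = ρ i.castSucc • g i.castSucc := by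
    intro i
    rw [hF, Finset.smul_sum]
    refine Finset.sum_congr rfl fun k _ => ?_
    rw [smul_smul, hP, hR]
    congr 1
    simp only [Fin.val_castSucc]
    split_ifs <;> first | omega | (field_simp; try ring)
  have hsum : ∑ i, ρ i • g i = 0 := by
    simp only [g, Finset.smul_sum, smul_smul]
    rw [Finset.sum_comm]
    refine Finset.sum_eq_zero fun k _ => ?_
    rw [← Finset.sum_smul]
    have : ∑ i : Fin (n+1), ρ i * ((if (i : ℕ) ≤ (k : ℕ) then (1:ℝ) else 0) - P k / r) = 0 := by
      simp only [mul_sub, Finset.sum_sub_distrib, ← Finset.sum_mul, mul_ite, mul_one, mul_zero]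
      rw [← hr]
      field_simp
      simp [P]
    rw [this, zero_smul]
  have hW : W j = g j.castSucc - g j.succ := by
    simp only [g, ← Finset.sum_sub_distrib, ← sub_smul]
    rw [Finset.sum_eq_single j]
    · simp
    · intro b _ hb
      have hb' : (b : ℕ) ≠ (j : ℕ) := fun h => hb (Fin.ext h)
      simp only [Fin.val_castSucc, Fin.val_succ]
      split_ifs <;> first | omega | simp
    · simp
  have hbound : ∀ i : Fin (n+1), ‖ρ i • g i‖ ≤ ∑ i, ‖F i‖ := by
    intro i
    refine Fin.lastCases ?_ (fun i => ?_) i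
    · rw [Fin.sum_univ_castSucc] at hsum
      rw [← norm_neg, ← eq_neg_of_add_eq_zero_left hsum]
      simp only [← hFg]
      exact norm_sum_le _ _
    · rw [← hFg]
      exact Finset.single_le_sum (f := fun i => ‖F i‖) (fun _ _ => norm_nonneg _)
        (Finset.mem_univ i)
  have hg : ∀ i : Fin (n+1), ‖g i‖ ≤ 1 / c * ∑ i, ‖F i‖ := by
    intro i
    have h1 := hbound i
    rw [norm_smul, Real.norm_of_nonneg (hc.le.trans (hρ i))] at h1
    have h2 := mul_le_mul_of_nonneg_right (hρ i) (norm_nonneg (g i))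
    rw [one_div_mul_eq_div, le_div_iff₀ hc]
    linarith
  calc ‖W j‖ = ‖g j.castSucc - g j.succ‖ := by rw [hW]
    _ ≤ ‖g j.castSucc‖ + ‖g j.succ‖ := norm_sub_le _ _
    _ ≤ 1 / c * ∑ i, ‖F i‖ + 1 / c * ∑ i, ‖F i‖ := add_le_add (hg _) (hg _)
    _ = 2 / c * ∑ i, ‖F i‖ := by ring

/-- For N = n+1 ≥ 2 and 0 < c ≤ M there is C > 0, depending only on n, c, M,
such that for all densities with ρᵢ ≥ c and Σρᵢ ≤ M and all vectors W₁,…,W_{N−1} in a real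
inner product space, Σⱼ ‖Wⱼ‖² ≤ C·Σᵢ ‖Σⱼ bᵢⱼ·Wⱼ‖², where b is the flux coefficient matrix. -/
theorem stmt_5 (n : ℕ) (hn : 1 ≤ n) (c M : ℝ) (hc : 0 < c) (hcM : c ≤ M) :
    ∃ C > 0, ∀ (E : Type) [NormedAddCommGroup E] [InnerProductSpace ℝ E],
      ∀ (ρ : Fin (n+1) → ℝ), (∀ i, c ≤ ρ i) → (∑ i, ρ i) ≤ M →
      ∀ W : Fin n → E,
        ∑ j, ‖W j‖ ^ 2 ≤
          C * ∑ i : Fin n, ‖∑ j : Fin n,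
            (if (j : ℕ) < (i : ℕ) then
              -(ρ i.castSucc / ∑ k, ρ k) *
                ∑ k ∈ Finset.univ.filter (fun k : Fin (n+1) => (k : ℕ) ≤ (j : ℕ)), ρ k
            else
              (ρ i.castSucc / ∑ k, ρ k) *
                ∑ k ∈ Finset.univ.filter (fun k : Fin (n+1) => (j : ℕ) < (k : ℕ)), ρ k) • W j‖ ^ 2 := by
  have hn' : (0:ℝ) < n := by exact_mod_cast hn
  refine ⟨n * ((2 / c) ^ 2 * n), by positivity, ?_⟩
  intro E _ _ ρ hρ _ W
  have key := flux_aux n c hc ρ hρ W _ (fun _ => rfl)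
  generalize hF : (fun i : Fin n => ∑ j : Fin n,
            (if (j : ℕ) < (i : ℕ) then
              -(ρ i.castSucc / ∑ k, ρ k) *
                ∑ k ∈ Finset.univ.filter (fun k : Fin (n+1) => (k : ℕ) ≤ (j : ℕ)), ρ k
            else
              (ρ i.castSucc / ∑ k, ρ k) *
                ∑ k ∈ Finset.univ.filter (fun k : Fin (n+1) => (j : ℕ) < (k : ℕ)), ρ k) • W j) = F
  have hF' := fun i => congrFun hF i
  simp only [hF'] at key ⊢
  have hcs : (∑ i, ‖F i‖) ^ 2 ≤ n * ∑ i, ‖F i‖ ^ 2 := by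
    simpa using sq_sum_le_card_mul_sum_sq (s := Finset.univ) (f := fun i => ‖F i‖)
  have h1 : ∀ j ∈ Finset.univ, ‖W j‖ ^ 2 ≤ (2 / c) ^ 2 * (n * ∑ i, ‖F i‖ ^ 2) := by
    intro j _
    calc ‖W j‖ ^ 2 ≤ (2 / c * ∑ i, ‖F i‖) ^ 2 := by
          gcongr
          exact key j
      _ = (2 / c) ^ 2 * (∑ i, ‖F i‖) ^ 2 := by ring
      _ ≤ _ := by gcongr
  refine (Finset.sum_le_sum h1).trans (le_of_eq ?_)
  simp only [Finset.sum_const, Finset.card_univ, Fintype.card_fin, nsmul_eq_mul]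
  ring
end

section
/- Let N ≥ 2, and for i = 1,…,N let γ_i > 1, m_i > 0 and z_i > 0 be real numbers; set a_i := (γ_i/m_i)·z_i^{γ_i−2}. Let M be the N×N real matrix with M_{i,i} = a_i and M_{i,i+1} = −a_{i+1} for i = 1,…,N−1, M_{N,j} = 1 for all j, and all other entries zero. Then det M = Σ_{i=1}^N Π_{j≠i} a_j > 0. In particular det M ≠ 0 for every z in the open positive orthant of ℝ^N. -/
/-- For γᵢ > 1, mᵢ > 0, zᵢ > 0 and aᵢ := (γᵢ/mᵢ)·zᵢ^{γᵢ−2}, the N×N matrix M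
with Mᵢᵢ = aᵢ, M_{i,i+1} = −a_{i+1}, last row all ones and zeros elsewhere satisfies
det M = Σᵢ Π_{j≠i} aⱼ > 0; in particular det M ≠ 0 on the open positive orthant. -/
theorem stmt_7 (N : ℕ) (hN : 2 ≤ N) (γ m z : Fin N → ℝ)
    (hγ : ∀ i, 1 < γ i) (hm : ∀ i, 0 < m i) (hz : ∀ i, 0 < z i)
    (a : Fin N → ℝ) (ha : ∀ i, a i = (γ i / m i) * z i ^ (γ i - 2))
    (M : Matrix (Fin N) (Fin N) ℝ)
    (hM : ∀ i j, M i j =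
      if (i : ℕ) = N - 1 then 1
      else if j = i then a i
      else if (j : ℕ) = (i : ℕ) + 1 then -(a j)
      else 0) :
    (M.det = ∑ i, ∏ j ∈ Finset.univ.erase i, a j) ∧ 0 < M.det := by
  have hapos : ∀ i, 0 < a i := fun i => by
    rw [ha]
    exact mul_pos (div_pos (by linarith [hγ i]) (hm i)) (Real.rpow_pos_of_pos (hz i) _)
  have hane : ∀ i, a i ≠ 0 := fun i => (hapos i).ne'
  have key : M.det = ∑ i, ∏ j ∈ Finset.univ.erase i, a j := by
    let P : Matrix (Fin N) (Fin N) ℝ := Matrix.of fun k j => if k ≤ j then (a k)⁻¹ else 0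
    have hP : ∀ k j, P k j = if k ≤ j then (a k)⁻¹ else 0 := fun k j => rfl
    have hPdet : P.det = ∏ i, (a i)⁻¹ := by
      rw [Matrix.det_of_isUpperTriangular]
      · exact Finset.prod_congr rfl fun i _ => by simp [hP]
      · intro i j hij
        have h : j < i := hij
        rw [hP, if_neg (not_le.mpr h)]
    have hrow : ∀ i j : Fin N, (i : ℕ) ≠ N - 1 → (M * P) i j = if i = j then 1 else 0 := by
      intro i j hi
      have hi' : (i : ℕ) + 1 < N := by have := i.isLt; omega
      have hMi : ∀ k, M i k = (if k = i then a k else 0)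
          - (if k = (⟨i + 1, hi'⟩ : Fin N) then a k else 0) := by
        intro k
        rw [hM, if_neg hi]
        by_cases h1 : k = i
        · subst h1
          simp [Fin.ext_iff]
        · by_cases h2 : (k : ℕ) = i + 1
          · have : k = (⟨i + 1, hi'⟩ : Fin N) := Fin.ext h2
            rw [if_neg h1, if_pos h2, if_neg h1, if_pos this, zero_sub]
          · have : k ≠ (⟨i + 1, hi'⟩ : Fin N) := fun h => h2 (congrArg Fin.val h)
            simp [h1, h2, this]
      rw [Matrix.mul_apply]
      simp only [hMi, sub_mul, Finset.sum_sub_distrib, ite_mul, zero_mul, Finset.sum_ite_eq',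
        Finset.mem_univ, if_true]
      simp only [hP, mul_ite, mul_zero, mul_inv_cancel₀ (hane _)]
      simp only [Fin.le_def, Fin.ext_iff]
      split_ifs <;> first | omega | norm_num
    let l : Fin N := ⟨N - 1, by omega⟩
    have hlast : (M * P) l l = ∑ i, (a i)⁻¹ := by
      rw [Matrix.mul_apply]
      refine Finset.sum_congr rfl fun k _ => ?_
      have : k ≤ l := by
        rw [Fin.le_def]
        show (k : ℕ) ≤ N - 1
        have := k.isLt
        omega
      rw [hM, hP, if_pos this, if_pos rfl, one_mul]
    have hdet : (M * P).det = ∑ i, (a i)⁻¹ := by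
      rw [Matrix.det_of_isLowerTriangular]
      · rw [Finset.prod_eq_single l, hlast]
        · intro b _ hb
          rw [hrow b b (fun h => hb (Fin.ext h)), if_pos rfl]
        · simp
      · intro i j hij
        have h : i < j := hij
        have h' : (i : ℕ) < j := h
        rw [hrow i j (by have := j.isLt; omega), if_neg h.ne]
    rw [Matrix.det_mul, hPdet, Finset.prod_inv_distrib] at hdet
    have hprod : ∏ i, a i ≠ 0 := Finset.prod_ne_zero_iff.mpr fun i _ => hane i
    rw [← div_eq_mul_inv, div_eq_iff hprod] at hdet
    rw [hdet, Finset.sum_mul]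
    refine Finset.sum_congr rfl fun i _ => ?_
    rw [← Finset.mul_prod_erase Finset.univ a (Finset.mem_univ i), inv_mul_cancel_left₀ (hane i)]
  refine ⟨key, ?_⟩
  rw [key]
  exact Finset.sum_pos (fun i _ => Finset.prod_pos fun j _ => hapos j)
    ⟨⟨0, by omega⟩, Finset.mem_univ _⟩
end

section
/- Let N ≥ 2, and for i = 1,…,N let c_i > 0 and α_i > 0 be real numbers. Define G : (0,∞)^N → ℝ^N by G(z₁,…,z_N) = (c₁ z₁^{α₁} − c₂ z₂^{α₂}, c₂ z₂^{α₂} − c₃ z₃^{α₃}, …, c_{N−1} z_{N−1}^{α_{N−1}} − c_N z_N^{α_N}, z₁ + z₂ + ⋯ + z_N). Then G is injective on the open positive orthant {z ∈ ℝ^N : z₁,…,z_N > 0}. -/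
/-- For N = n+1 ≥ 2, cᵢ > 0 and αᵢ > 0, the map
G(z) = (c₁z₁^{α₁} − c₂z₂^{α₂}, …, c_{N−1}z_{N−1}^{α_{N−1}} − c_N z_N^{α_N}, z₁+⋯+z_N)
is injective on the open positive orthant. (Here the last coordinate is index n, and for
i with (i : ℕ) ≠ n the i-th coordinate is cᵢ zᵢ^{αᵢ} − c_{i+1} z_{i+1}^{α_{i+1}}.) -/
theorem stmt_9 (n : ℕ) (hn : 1 ≤ n) (c α : Fin (n+1) → ℝ)
    (hc : ∀ i, 0 < c i) (hα : ∀ i, 0 < α i)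
    (G : (Fin (n+1) → ℝ) → (Fin (n+1) → ℝ))
    (hG : ∀ z i, G z i =
      if (i : ℕ) = n then ∑ j, z j
      else c i * z i ^ α i - c (i + 1) * z (i + 1) ^ α (i + 1)) :
    ∀ z w : Fin (n+1) → ℝ, (∀ i, 0 < z i) → (∀ i, 0 < w i) → G z = G w → z = w := by
  intro z w hz hw h
  have hsum : ∑ j, z j = ∑ j, w j := by
    have h1 := congrFun h (Fin.last n)
    rw [hG, hG] at h1
    simpa using h1
  have hD : ∀ i, c i * z i ^ α i - c i * w i ^ α i = c 0 * z 0 ^ α 0 - c 0 * w 0 ^ α 0 := by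
    intro i
    induction i using Fin.induction with
    | zero => rfl
    | succ i ih =>
      have h1 := congrFun h i.castSucc
      have hne : ((i.castSucc : Fin (n+1)) : ℕ) ≠ n := by
        have := i.isLt
        simp only [Fin.val_castSucc]
        omega
      rw [hG, hG, if_neg hne, if_neg hne, Fin.coeSucc_eq_succ] at h1
      linarith
  have key : ∀ i, (z i < w i ↔ c i * z i ^ α i < c i * w i ^ α i) := by
    intro i
    rw [mul_lt_mul_iff_right₀ (hc i), Real.rpow_lt_rpow_iff (hz i).le (hw i).le (hα i)]
  have key' : ∀ i, (w i < z i ↔ c i * w i ^ α i < c i * z i ^ α i) := by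
    intro i
    rw [mul_lt_mul_iff_right₀ (hc i), Real.rpow_lt_rpow_iff (hw i).le (hz i).le (hα i)]
  rcases lt_trichotomy (c 0 * z 0 ^ α 0) (c 0 * w 0 ^ α 0) with h0 | h0 | h0
  · have : ∑ j, z j < ∑ j, w j :=
      Finset.sum_lt_sum_of_nonempty Finset.univ_nonempty
        (fun i _ => (key i).2 (by linarith [hD i]))
    linarith
  · funext i
    apply le_antisymm
    · by_contra hlt
      have := (key' i).1 (not_le.1 hlt)
      linarith [hD i]
    · by_contra hlt
      have := (key i).1 (not_le.1 hlt)
      linarith [hD i]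
  · have : ∑ j, w j < ∑ j, z j :=
      Finset.sum_lt_sum_of_nonempty Finset.univ_nonempty
        (fun i _ => (key' i).2 (by linarith [hD i]))
    linarith
end

section
/- Let 0 < t₁ ≤ 1 and let z : [0, t₁] → ℝ be differentiable with 0 < z(t) < 1 for all t ∈ [0, t₁], satisfying z′(t) = z(t)·(1 − ln z(t)) for all t ∈ [0, t₁]. Then for every t ∈ [0, t₁], z(t) ≤ e^t · z(0)^{1−t}. -/
/-- If 0 < t₁ ≤ 1 and z : [0,t₁] → (0,1) is differentiable with
z′(t) = z(t)·(1 − ln z(t)) on [0,t₁], then z(t) ≤ eᵗ·z(0)^{1−t} for all t ∈ [0,t₁]. -/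
theorem stmt_11 (t₁ : ℝ) (ht₁ : 0 < t₁) (ht₁' : t₁ ≤ 1) (z : ℝ → ℝ)
    (hz : ∀ t ∈ Set.Icc (0 : ℝ) t₁, 0 < z t ∧ z t < 1)
    (hz' : ∀ t ∈ Set.Icc (0 : ℝ) t₁, HasDerivAt z (z t * (1 - Real.log (z t))) t) :
    ∀ t ∈ Set.Icc (0 : ℝ) t₁, z t ≤ Real.exp t * z 0 ^ (1 - t) := by
  have hw : ∀ t ∈ Set.Icc (0 : ℝ) t₁,
      HasDerivAt (fun s => Real.log (z s)) (1 - Real.log (z t)) t := by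
    intro t ht
    have hne := (hz t ht).1.ne'
    have h := (hz' t ht).log hne
    rwa [mul_div_cancel_left₀ _ hne] at h
  have hcont : ContinuousOn (fun s => Real.log (z s)) (Set.Icc 0 t₁) :=
    fun t ht => (hw t ht).continuousAt.continuousWithinAt
  have hmono : MonotoneOn (fun s => Real.log (z s)) (Set.Icc 0 t₁) := by
    refine monotoneOn_of_hasDerivWithinAt_nonneg (convex_Icc _ _) hcont
      (fun x hx => (hw x (interior_subset hx)).hasDerivWithinAt) ?_
    intro x hx
    have h := hz x (interior_subset hx)
    have := Real.log_neg h.1 h.2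
    linarith
  have h0 : (0 : ℝ) ∈ Set.Icc (0 : ℝ) t₁ := ⟨le_rfl, ht₁.le⟩
  intro t ht
  have key : Real.log (z t) ≤ Real.log (z 0) + t * (1 - Real.log (z 0)) := by
    refine image_le_of_deriv_right_le_deriv_boundary (a := 0) (b := t₁)
      (B := fun s => Real.log (z 0) + s * (1 - Real.log (z 0)))
      (B' := fun _ => 1 - Real.log (z 0)) hcont
      (fun x hx => (hw x (Set.Ico_subset_Icc_self hx)).hasDerivWithinAt) (by simp)
      (by fun_prop) ?_ ?_ ht
    · intro x _
      have h := ((hasDerivAt_id x).mul_const (1 - Real.log (z 0))).const_add (Real.log (z 0))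
      simpa using h.hasDerivWithinAt
    · intro x hx
      have h := hmono h0 (Set.Ico_subset_Icc_self hx) hx.1
      simp only at h
      linarith
  rw [Real.rpow_def_of_pos (hz 0 h0).1, ← Real.exp_add, ← Real.log_le_iff_le_exp (hz t ht).1]
  linarith
end
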